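/- Let f : [n] → [n] be a subexcedant function and let σ = (n f(n)) ∘ ⋯ ∘ (2 f(2)) ∘ (1 f(1)) be the associated permutation, where (i j) denotes the transposition of i and j. Then the complement in [n] of the image of f equals the set of excedance values of σ: [n] \ supp(f) = EXCv(σ). In particular, exc(σ) = n - |supp(f)|. -/

import Mathlib

open Finset

/-- Number of inversions of a permutation of `Fin n`. -/
def inversions {n : ℕ} (π : Equiv.Perm (Fin n)) : ℕ :=
  (Finset.univ.filter fun p : Fin n × Fin n => p.1 < p.2 ∧ π p.2 < π p.1).card

/-- Excedance indices of a permutation. -/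
def EXCi {n : ℕ} (π : Equiv.Perm (Fin n)) : Finset (Fin n) :=
  Finset.univ.filter fun i => i < π i

/-- Excedance values of a permutation. -/
def EXCv {n : ℕ} (π : Equiv.Perm (Fin n)) : Finset (Fin n) :=
  (EXCi π).image π

/-- The permutation `(n f(n)) ∘ ⋯ ∘ (2 f(2)) ∘ (1 f(1))` associated to a
subexcedant function `f` (the transposition `(1 f(1))` is applied first). -/
def sefPerm {n : ℕ} (f : Fin n → Fin n) : Equiv.Perm (Fin n) :=
  ((List.ofFn fun i : Fin n => Equiv.swap i (f i)).reverse).prod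

/-!
Multiplying on the left by `(a b)`, where `b ≤ a` and `π` fixes every point `≥ a`, adds `a` to the
excedance values of `π` and then removes `b`. Since `k` is not a value of `f` on `{1, …, k - 1}`,
the factors `(1 f(1)), …, (k f(k))` therefore produce exactly the excedance values
`{1, …, k} \ f({1, …, k})`.
-/

section LinearOrder

variable {α : Type*} [LinearOrder α] {π : Equiv.Perm α} {a b w : α}

lemma inv_apply_lt_of_fixes_Ici (hπ : ∀ x, a ≤ x → π x = x) (hw : w < a) : π⁻¹ w < a := by
  by_contra! h
  have hfix : w = π⁻¹ w := by simpa using hπ _ h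
  exact hw.not_ge (h.trans hfix.ge)

lemma inv_swap_mul_apply_lt_iff (hba : b ≤ a) (hπ : ∀ x, a ≤ x → π x = x) (v : α) :
    (Equiv.swap a b * π)⁻¹ v < v ↔ (v = a ∨ π⁻¹ v < v) ∧ v ≠ b := by
  have hinv : (Equiv.swap a b * π)⁻¹ v = π⁻¹ (Equiv.swap a b v) := by
    rw [mul_inv_rev, Equiv.swap_inv, Equiv.Perm.mul_apply]
  have ha : π⁻¹ a = a := Equiv.Perm.inv_eq_iff_eq.2 (hπ a le_rfl).symm
  rw [hinv]
  rcases eq_or_ne v b with rfl | hvb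
  · simp [ha, hba]
  rcases eq_or_ne v a with rfl | hva
  · have hlt : π⁻¹ b < v := inv_apply_lt_of_fixes_Ici hπ (hba.lt_of_ne hvb.symm)
    simpa [hvb] using hlt
  · simp [Equiv.swap_apply_of_ne_of_ne hva hvb, hva, hvb]

end LinearOrder

section SwapProd

variable {α : Type*}

/-- The product `(iₖ f(iₖ)) ∘ ⋯ ∘ (i₁ f(i₁))` for a list `[i₁, …, iₖ]`. It extends `sefPerm`, which
is the case of the list of all elements of `Fin n`, to the partial products on which one inducts. -/
def swapProd [DecidableEq α] (f : α → α) (l : List α) : Equiv.Perm α :=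
  (l.map fun i => Equiv.swap i (f i)).reverse.prod

lemma swapProd_concat [DecidableEq α] (f : α → α) (l : List α) (a : α) :
    swapProd f (l ++ [a]) = Equiv.swap a (f a) * swapProd f l := by
  simp [swapProd]

lemma swapProd_apply_of_notMem [DecidableEq α] {f : α → α} {l : List α} {x : α}
    (hx : x ∉ l) (hfx : x ∉ l.map f) : swapProd f l x = x := by
  induction l using List.reverseRecOn with
  | nil => rfl
  | append_singleton l a ih =>
    simp only [List.map_append, List.map_singleton, List.mem_append, List.mem_singleton,
      not_or] at hx hfx
    rw [swapProd_concat, Equiv.Perm.mul_apply, ih hx.1 hfx.1,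
      Equiv.swap_apply_of_ne_of_ne hx.2 hfx.2]

theorem inv_swapProd_apply_lt_iff [LinearOrder α] {f : α → α} {l : List α}
    (hl : l.Pairwise (· < ·)) (hf : ∀ i ∈ l, f i ≤ i) (v : α) :
    (swapProd f l)⁻¹ v < v ↔ v ∈ l ∧ v ∉ l.map f := by
  induction l using List.reverseRecOn with
  | nil => simp [swapProd]
  | append_singleton l a ih =>
    simp only [List.pairwise_append, List.pairwise_singleton, List.mem_singleton, forall_eq,
      true_and] at hl
    simp only [List.mem_append, List.mem_singleton, or_imp, forall_and, forall_eq] at hf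
    obtain ⟨hsorted, hlt⟩ := hl
    obtain ⟨hfl, hfa⟩ := hf
    have notMem_map {x : α} (hx : a ≤ x) : x ∉ l.map f := by
      simp only [List.mem_map, not_exists, not_and]
      exact fun i hi => (((hfl i hi).trans_lt (hlt i hi)).trans_le hx).ne
    have hfix (x : α) (hx : a ≤ x) : swapProd f l x = x :=
      swapProd_apply_of_notMem (fun hxl => (hlt x hxl).not_ge hx) (notMem_map hx)
    rw [swapProd_concat, inv_swap_mul_apply_lt_iff hfa hfix, ih hsorted hfl]
    have ha : v = a → v ∉ l.map f := fun h => notMem_map h.ge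
    simp only [List.map_append, List.map_singleton, List.mem_append, List.mem_singleton]
    tauto

end SwapProd

section Excedances

variable {n : ℕ}

lemma mem_EXCv {π : Equiv.Perm (Fin n)} {v : Fin n} : v ∈ EXCv π ↔ π⁻¹ v < v := by
  simp only [EXCv, EXCi, mem_image, mem_filter, mem_univ, true_and]
  constructor
  · rintro ⟨i, hi, rfl⟩
    simpa using hi
  · exact fun h => ⟨π⁻¹ v, by simpa using h, by simp⟩

lemma card_EXCv (π : Equiv.Perm (Fin n)) : (EXCv π).card = (EXCi π).card :=
  card_image_of_injective _ π.injective

lemma sefPerm_eq_swapProd (f : Fin n → Fin n) : sefPerm f = swapProd f (List.finRange n) := by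
  rw [sefPerm, swapProd, List.ofFn_eq_map]

theorem EXCv_sefPerm {f : Fin n → Fin n} (hf : ∀ i, f i ≤ i) :
    EXCv (sefPerm f) = univ \ univ.image f := by
  ext v
  rw [mem_EXCv, sefPerm_eq_swapProd,
    inv_swapProd_apply_lt_iff (List.pairwise_lt_finRange n) fun i _ => hf i]
  simp

end Excedances

theorem stmt13 (n : ℕ) (f : Fin n → Fin n) (hf : ∀ i, f i ≤ i) :
    Finset.univ \ Finset.univ.image f = EXCv (sefPerm f)
    ∧ (EXCi (sefPerm f)).card = n - (Finset.univ.image f).card := by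
  refine ⟨(EXCv_sefPerm hf).symm, ?_⟩
  rw [← card_EXCv, EXCv_sefPerm hf, card_univ_sdiff, Fintype.card_fin]
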